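/- arXiv:2401.09650 — 2 statements merged into one kernel-verified Lean document; each statement's English description precedes it below -/
import Mathlib

section
/- Let k, n ≥ 1, let p^(1), …, p^(n) be probability distributions on {1,…,k} with p^(i)(x) > 0 for all i and x, and let θ be a random variable taking values in a finite set Θ such that for each θ ∈ Θ and each i, q_θ^(i) is a probability distribution on {1,…,k}. Let P = p^(1) ⊗ ⋯ ⊗ p^(n) and Q_θ = q_θ^(1) ⊗ ⋯ ⊗ q_θ^(n) be the corresponding product distributions on {1,…,k}^n. Then χ²(E_θ[Q_θ] ‖ P) = E_{θ,θ'}[∏_{i=1}^n (1 + H_i(θ, θ'))] − 1, where θ' is an independent copy of θ, H_i(θ, θ') = ∑_{x=1}^k p^(i)(x) δ_θ^(i)(x) δ_{θ'}^(i)(x), and δ_θ^(i)(x) = (q_θ^(i)(x) − p^(i)(x))/p^(i)(x). -/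
/-!
Write `⟨μ, μ'⟩_ν = ∑ x, μ x * μ' x / ν x`. Then `H(μ, μ')` is this form at the centred arguments
`μ - ν` and `μ' - ν`, and `χ²(μ ‖ ν)` is its value on the diagonal. Since `⟨μ, ν⟩_ν` is the mass of
`μ`, centring distributions of mass one only subtracts `1` from `⟨μ, μ'⟩_ν`. The form is bilinear,
which turns a mixture into a double average over `θ` and `θ'`, and it is multiplicative over
product distributions, which turns it into `∏ i, (1 + H_i)`.
-/

open BigOperators

noncomputable section

section Distributions

variable {R : Type*} [CommSemiring R]

/-- The mixture `E_θ[q_θ]` of the mass functions `q θ` with weights `w`, which need not be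
nonnegative or sum to one. -/
def mixture {Θ α : Type*} [Fintype Θ] (w : Θ → R) (q : Θ → α → R) (x : α) : R :=
  ∑ θ, w θ * q θ x

/-- The mass function of the product of the distributions with mass functions `p i`, where the
alphabet `α i` may depend on the coordinate. -/
def productDist {ι : Type*} [Fintype ι] {α : ι → Type*} (p : ∀ i, α i → R) (x : ∀ i, α i) : R :=
  ∏ i, p i (x i)

theorem sum_mixture {Θ α : Type*} [Fintype Θ] [Fintype α] (w : Θ → R) (q : Θ → α → R) :
    ∑ x, mixture w q x = ∑ θ, w θ * ∑ x, q θ x := by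
  simp only [mixture, Finset.mul_sum]
  exact Finset.sum_comm

theorem sum_productDist {ι : Type*} [Fintype ι] [DecidableEq ι] {α : ι → Type*}
    [∀ i, Fintype (α i)] (p : ∀ i, α i → R) :
    ∑ x, productDist p x = ∏ i, ∑ y, p i y :=
  (Fintype.prod_sum p).symm

end Distributions

section ChiSquare

variable {K : Type*} [Field K] {α : Type*} [Fintype α]

/-- The chi-square divergence `χ²(μ ‖ ν)` of mass functions on a finite alphabet. The quotients are
meaningful only where `ν` does not vanish. -/
def chiSqDiv (μ ν : α → K) : K :=
  ∑ x, (μ x - ν x) ^ 2 / ν x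

/-- The bilinear form `⟨μ, μ'⟩_ν`: the `L²(ν)` inner product of the likelihood ratios of `μ` and
`μ'` with respect to `ν`, with the factor `ν x` cancelled. -/
def chiSqInner (ν μ μ' : α → K) : K :=
  ∑ x, μ x * μ' x / ν x

/-- The relative deviation `δ` of `μ` from `ν`. -/
def relativeDeviation (ν μ : α → K) (x : α) : K :=
  (μ x - ν x) / ν x

/-- The correlation `H` under `ν` of the relative deviations of `μ` and `μ'` from `ν`. -/
def deviationCorrelation (ν μ μ' : α → K) : K :=
  ∑ x, ν x * relativeDeviation ν μ x * relativeDeviation ν μ' x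

theorem chiSqDiv_eq_chiSqInner_sub_sub (μ ν : α → K) :
    chiSqDiv μ ν = chiSqInner ν (μ - ν) (μ - ν) := by
  simp only [chiSqDiv, chiSqInner, Pi.sub_apply, sq]

theorem deviationCorrelation_eq_chiSqInner_sub_sub (ν μ μ' : α → K) :
    deviationCorrelation ν μ μ' = chiSqInner ν (μ - ν) (μ' - ν) := by
  refine Finset.sum_congr rfl fun x _ => ?_
  simp only [relativeDeviation, Pi.sub_apply]
  field

theorem chiSqInner_sub_sub {ν : α → K} (hν : ∀ x, ν x ≠ 0) (μ μ' : α → K) :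
    chiSqInner ν (μ - ν) (μ' - ν) =
      chiSqInner ν μ μ' - ∑ x, μ x - ∑ x, μ' x + ∑ x, ν x := by
  simp only [chiSqInner, ← Finset.sum_sub_distrib, ← Finset.sum_add_distrib, Pi.sub_apply]
  refine Finset.sum_congr rfl fun x _ => ?_
  have := hν x
  field

theorem chiSqInner_sub_sub_of_sum_eq_one {ν μ μ' : α → K} (hν : ∀ x, ν x ≠ 0)
    (hν1 : ∑ x, ν x = 1) (hμ1 : ∑ x, μ x = 1) (hμ'1 : ∑ x, μ' x = 1) :
    chiSqInner ν (μ - ν) (μ' - ν) = chiSqInner ν μ μ' - 1 := by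
  rw [chiSqInner_sub_sub hν, hν1, hμ1, hμ'1, sub_add_cancel]

theorem one_add_deviationCorrelation {ν μ μ' : α → K} (hν : ∀ x, ν x ≠ 0)
    (hν1 : ∑ x, ν x = 1) (hμ1 : ∑ x, μ x = 1) (hμ'1 : ∑ x, μ' x = 1) :
    1 + deviationCorrelation ν μ μ' = chiSqInner ν μ μ' := by
  rw [deviationCorrelation_eq_chiSqInner_sub_sub,
    chiSqInner_sub_sub_of_sum_eq_one hν hν1 hμ1 hμ'1, add_sub_cancel]

theorem chiSqInner_mixture {Θ Θ' : Type*} [Fintype Θ] [Fintype Θ'] (ν : α → K)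
    (w : Θ → K) (q : Θ → α → K) (w' : Θ' → K) (q' : Θ' → α → K) :
    chiSqInner ν (mixture w q) (mixture w' q') =
      ∑ θ, ∑ θ', w θ * w' θ' * chiSqInner ν (q θ) (q' θ') := by
  calc
    _ = ∑ x, ∑ θ, ∑ θ', w θ * w' θ' * (q θ x * q' θ' x / ν x) := by
      simp only [chiSqInner, mixture, Finset.sum_mul_sum, Finset.sum_div, mul_mul_mul_comm,
        mul_div_assoc]
    _ = ∑ θ, ∑ θ', ∑ x, w θ * w' θ' * (q θ x * q' θ' x / ν x) := by
      rw [Finset.sum_comm]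
      exact Finset.sum_congr rfl fun _ _ => Finset.sum_comm
    _ = _ := by simp only [chiSqInner, Finset.mul_sum]

theorem chiSqInner_productDist {ι : Type*} [Fintype ι] [DecidableEq ι] {α : ι → Type*}
    [∀ i, Fintype (α i)] (ν μ μ' : ∀ i, α i → K) :
    chiSqInner (productDist ν) (productDist μ) (productDist μ') =
      ∏ i, chiSqInner (ν i) (μ i) (μ' i) := by
  simp only [chiSqInner, productDist, Fintype.prod_sum, Finset.prod_mul_distrib,
    Finset.prod_div_distrib]

theorem chiSqDiv_mixture {Θ : Type*} [Fintype Θ] {ν : α → K} (hν : ∀ x, ν x ≠ 0)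
    (hν1 : ∑ x, ν x = 1) {w : Θ → K} (hw1 : ∑ θ, w θ = 1) {q : Θ → α → K}
    (hq1 : ∀ θ, ∑ x, q θ x = 1) :
    chiSqDiv (mixture w q) ν =
      (∑ θ, ∑ θ', w θ * w θ' * chiSqInner ν (q θ) (q θ')) - 1 := by
  have hmix : ∑ x, mixture w q x = 1 := by simp only [sum_mixture, hq1, mul_one, hw1]
  rw [chiSqDiv_eq_chiSqInner_sub_sub, chiSqInner_sub_sub_of_sum_eq_one hν hν1 hmix hmix,
    chiSqInner_mixture]

end ChiSquare

theorem chi_square_decoupling_general {K ι Θ : Type*} [Field K] [Fintype ι] [DecidableEq ι]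
    [Fintype Θ] {α : ι → Type*} [∀ i, Fintype (α i)]
    {p : ∀ i, α i → K} (hp : ∀ i x, p i x ≠ 0) (hp1 : ∀ i, ∑ x, p i x = 1)
    {w : Θ → K} (hw1 : ∑ θ, w θ = 1)
    {q : Θ → ∀ i, α i → K} (hq1 : ∀ θ i, ∑ x, q θ i x = 1) :
    chiSqDiv (mixture w fun θ => productDist (q θ)) (productDist p) =
      (∑ θ, ∑ θ', w θ * w θ' *
        ∏ i, (1 + deviationCorrelation (p i) (q θ i) (q θ' i))) - 1 := by
  have hP : ∀ x, productDist p x ≠ 0 := fun x => Finset.prod_ne_zero_iff.2 fun i _ => hp i (x i)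
  have hP1 : ∑ x, productDist p x = 1 := by simp only [sum_productDist, hp1, Finset.prod_const_one]
  have hQ1 : ∀ θ, ∑ x, productDist (q θ) x = 1 := fun θ => by
    simp only [sum_productDist, hq1, Finset.prod_const_one]
  simp only [chiSqDiv_mixture hP hP1 hw1 hQ1, chiSqInner_productDist,
    one_add_deviationCorrelation (hp _) (hp1 _) (hq1 _ _) (hq1 _ _)]

/-- Pollard's decoupled chi-square identity: for a fixed product distribution
`P = p⁽¹⁾ ⊗ ⋯ ⊗ p⁽ⁿ⁾` on `{1,…,k}ⁿ` with positive marginals and a random product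
distribution `Q_θ = q_θ⁽¹⁾ ⊗ ⋯ ⊗ q_θ⁽ⁿ⁾` with `θ` ranging over a finite probability
space, one has `χ²(E_θ[Q_θ] ‖ P) = E_{θ,θ'}[∏ᵢ (1 + Hᵢ(θ,θ'))] − 1` where
`Hᵢ(θ,θ') = ∑ₓ p⁽ⁱ⁾(x) δ_θ⁽ⁱ⁾(x) δ_{θ'}⁽ⁱ⁾(x)` and
`δ_θ⁽ⁱ⁾(x) = (q_θ⁽ⁱ⁾(x) − p⁽ⁱ⁾(x))/p⁽ⁱ⁾(x)`. -/
theorem chi_square_decoupling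
    {k n : ℕ} (hk : 1 ≤ k) (hn : 1 ≤ n)
    (p : Fin n → Fin k → ℝ) (hp : ∀ i x, 0 < p i x) (hp1 : ∀ i, ∑ x, p i x = 1)
    {Θ : Type} [Fintype Θ] [Nonempty Θ]
    (w : Θ → ℝ) (hw : ∀ θ, 0 ≤ w θ) (hw1 : ∑ θ, w θ = 1)
    (q : Θ → Fin n → Fin k → ℝ)
    (hq : ∀ θ i x, 0 ≤ q θ i x) (hq1 : ∀ θ i, ∑ x, q θ i x = 1) :
    ∑ x : Fin n → Fin k,
      ((∑ θ, w θ * ∏ i, q θ i (x i)) - ∏ i, p i (x i)) ^ 2 / ∏ i, p i (x i)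
    = (∑ θ, ∑ θ', w θ * w θ' *
        ∏ i, (1 + ∑ x, p i x * ((q θ i x - p i x) / p i x)
            * ((q θ' i x - p i x) / p i x))) - 1 :=
  chi_square_decoupling_general (fun i x => (hp i x).ne') hp1 hw1 hq1

end
end

section
/- There exists a universal constant c with 0 < c ≤ 10√2 such that the following holds. Let d ≥ 16, let ℓ be an integer with d²/2 ≤ ℓ ≤ d²−1, let V_1, …, V_{d²} be an orthonormal basis (with respect to the Hilbert–Schmidt inner product) of the real vector space of Hermitian d×d complex matrices with V_{d²} = I_d/√d, and let 0 < ε < 1/c². For z ∈ {−1,1}^ℓ set Δ_z = (c ε/√(d ℓ)) ∑_{i=1}^ℓ z_i V_i and Δ̄_z = Δ_z · min{1, 1/(d ‖Δ_z‖_op)}, and let z, z' be independent and uniform on {−1,1}^ℓ. Let H̄ = (1/n) ∑_{i=1}^n H_i be the average of the Lüders channels of n rank-1 POVMs on ℂ^d. Then for every n < d²/(6 c² ε²): E_{z,z'}[exp(n d · Tr[Δ̄_{z'} H̄(Δ̄_z)])] − 1 ≤ exp((c² n² ε⁴/ℓ²) · ∑_{i=1}^ℓ ∑_{j=1}^ℓ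 (Tr[V_i H̄(V_j)])²) − 1 + 4 exp(−d). -/
/-! The factor `min 1 (1 / (d ‖Δ_z‖))` is even in `z` and at most `1`. For fixed `z`, averaging over
`z'` and `-z'` turns the exponential into a hyperbolic cosine, which increases with the absolute
value of its argument, so these factors can only decrease the expectation and may be dropped.

With `c = 1`, what remains is the chaos `E exp (z'ᵀ A z)`, where `A` is, up to the scalar
`r = n ε² / ℓ`, the matrix of `H̄` compressed to the span of the `V i`. Each Lüders channel is a
contraction for the Hilbert–Schmidt norm: by Cauchy–Schwarz in `ℂ^d`,
`|⟨Y, H X⟩| ≤ ∑ x, ‖Y ψ_x‖ ‖X ψ_x‖`, and `∑ x, ‖X ψ_x‖² = ‖X‖²`. Hence `‖A‖ ≤ r` by Bessel's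
inequality. Averaging over `z'` leaves
`E exp (zᵀ M z / 2)` with `0 ≤ M = Aᵀ A ≤ θ = r²`, and the signs `z i` are averaged out one at a
time: `cosh t ≤ exp (t² / 2)` replaces `M` by the positive semidefinite matrix `M' + m mᵀ`, where
`m` is the removed row and `M'` the remaining block. Testing `M ≤ θ` on the vector `(m · w, w)`
shows that this matrix is still at most `θ`, and `M² ≤ θ M` controls its trace, so that the
invariant bound is `exp (tr M / (2 (1 - θ)))`. As `r ≤ 1 / 2`, this is at most `exp (tr M)`.
-/

open Matrix BigOperators
open scoped ComplexOrder

noncomputable section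

/-- The Lüders channel of a rank-1 POVM given by the (not necessarily normalized)
vectors `ψ x`:  `H(X) = ∑ x, |ψ_x⟩⟨ψ_x| X |ψ_x⟩⟨ψ_x| / ⟨ψ_x, ψ_x⟩`. -/
def luders {d k : ℕ} (ψ : Fin k → Fin d → ℂ) (X : Matrix (Fin d) (Fin d) ℂ) :
    Matrix (Fin d) (Fin d) ℂ :=
  ∑ x, (star (ψ x) ⬝ᵥ ψ x)⁻¹ •
    (vecMulVec (ψ x) (star (ψ x)) * X * vecMulVec (ψ x) (star (ψ x)))

/-- The `ℓ² → ℓ²` operator norm (largest singular value) of a complex matrix. -/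
def opNorm {m n : ℕ} (A : Matrix (Fin m) (Fin n) ℂ) : ℝ :=
  ‖LinearMap.toContinuousLinearMap (Matrix.toEuclideanLin A)‖

/-- The sign `±1` associated with a boolean. -/
def sign (b : Bool) : ℝ := if b then 1 else -1

section Signs

variable {ι κ : Type*}

/-- The vector in `{-1, 1}^ι` encoded by a family of booleans. -/
def signVec (z : ι → Bool) : ι → ℝ := fun i => sign (z i)

lemma sign_not (b : Bool) : sign (!b) = -sign b := by
  cases b <;> simp [sign]

lemma signVec_compl (z : ι → Bool) : signVec zᶜ = -signVec z :=
  funext fun i => sign_not (z i)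

lemma signVec_optionElim (b : Bool) (w : ι → Bool) :
    signVec (fun o : Option ι => o.elim b w) = fun o => o.elim (sign b) (signVec w) := by
  ext o
  cases o <;> rfl

lemma sign_sq (b : Bool) : sign b ^ 2 = 1 := by
  cases b <;> simp [sign]

lemma expect_exp_sign_mul (t : ℝ) : 𝔼 b, Real.exp (sign b * t) = Real.cosh t := by
  rw [Fintype.expect_eq_sum_div_card]
  simp [Real.cosh_eq, sign]

variable [Fintype ι] [DecidableEq ι] [Fintype κ]

lemma expect_prod_eq_prod_expect {K : Type*} [Semifield K] [CharZero K] (f : ι → κ → K) :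
    𝔼 z : ι → κ, ∏ i, f i (z i) = ∏ i, 𝔼 k, f i k := by
  simp [Fintype.expect_eq_sum_div_card, Fintype.prod_sum, Finset.prod_div_distrib]

lemma expect_optionElim {E : Type*} [AddCommMonoid E] [Module ℚ≥0 E] (f : (Option ι → κ) → E) :
    𝔼 z, f z = 𝔼 w : ι → κ, 𝔼 k, f (fun o => o.elim k w) := by
  rw [Finset.expect_comm, ← Finset.expect_product', Finset.univ_product_univ]
  refine Fintype.expect_equiv Equiv.piOptionEquivProd _ _ fun z => congrArg f ?_
  ext (_ | i) <;> rfl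

lemma expect_exp_signVec_dotProduct_le (v : ι → ℝ) :
    𝔼 z, Real.exp (signVec z ⬝ᵥ v) ≤ Real.exp ((v ⬝ᵥ v) / 2) := by
  calc 𝔼 z, Real.exp (signVec z ⬝ᵥ v)
      = ∏ i, Real.cosh (v i) := by
        simp only [dotProduct, signVec, Real.exp_sum, ← expect_exp_sign_mul,
          expect_prod_eq_prod_expect fun i b => Real.exp (sign b * v i)]
    _ ≤ ∏ i, Real.exp (v i ^ 2 / 2) :=
        Finset.prod_le_prod (fun i _ => (Real.cosh_pos _).le)
          fun i _ => Real.cosh_le_exp_half_sq (v i)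
    _ = Real.exp ((v ⬝ᵥ v) / 2) := by
        simp only [← Real.exp_sum, ← Finset.sum_div, dotProduct, sq]

end Signs

section QuadraticChaos

variable {ι : Type*} {M : Matrix (Option ι) (Option ι) ℝ}

/-- The matrix `M' + m mᵀ`, where `M'` is the block of `M` on `ι` and `m` its `none` row: up to the
factor `exp (M none none / 2)`, averaging `exp (xᵀ M x / 2)` over the sign `x none` is dominated by
the same expression for this matrix. -/
def elimNone (M : Matrix (Option ι) (Option ι) ℝ) : Matrix ι ι ℝ :=
  M.submatrix some some + vecMulVec (M none ∘ some) (M none ∘ some)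

lemma posSemidef_elimNone [Finite ι] (hM : M.PosSemidef) : (elimNone M).PosSemidef :=
  (hM.submatrix some).add (posSemidef_vecMulVec_self_star _)

variable [Fintype ι]

open scoped MatrixOrder in
lemma mulVec_dotProduct_mulVec_le {θ : ℝ} {M : Matrix ι ι ℝ} (hM : M.PosSemidef)
    (hMθ : ∀ x, x ⬝ᵥ M *ᵥ x ≤ θ * (x ⬝ᵥ x)) (x : ι → ℝ) :
    (M *ᵥ x) ⬝ᵥ (M *ᵥ x) ≤ θ * (x ⬝ᵥ M *ᵥ x) := by
  classical
  let S := CFC.sqrt M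
  have hS : Sᵀ = S := isHermitian_iff_isSymm.mp (CFC.sqrt_nonneg M).posSemidef.isHermitian
  have hsymm (u w : ι → ℝ) : (S *ᵥ u) ⬝ᵥ w = u ⬝ᵥ S *ᵥ w := by
    rw [dotProduct_mulVec, ← mulVec_transpose, hS]
  have hSM : S * S = M := CFC.sqrt_mul_sqrt_self M hM.nonneg
  simpa only [← hSM, ← mulVec_mulVec, hsymm] using hMθ (S *ᵥ x)

lemma dotProduct_mulVec_optionElim (hM : M.IsSymm) (t : ℝ) (w : ι → ℝ) :
    (fun o : Option ι => o.elim t w) ⬝ᵥ M *ᵥ (fun o => o.elim t w) =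
      t ^ 2 * M none none + 2 * t * ((M none ∘ some) ⬝ᵥ w) + w ⬝ᵥ M.submatrix some some *ᵥ w := by
  have hsymm (i : ι) : M (some i) none = M none (some i) := hM.apply _ _
  have hcross : ∑ i, w i * (M none (some i) * t) = t * ∑ i, M none (some i) * w i := by
    rw [Finset.mul_sum]
    exact Finset.sum_congr rfl fun i _ => by ring
  simp only [dotProduct, mulVec, Fintype.sum_option, Option.elim, hsymm, Function.comp,
    submatrix_apply, mul_add, Finset.sum_add_distrib, hcross]
  ring

lemma dotProduct_elimNone_mulVec (w : ι → ℝ) :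
    w ⬝ᵥ elimNone M *ᵥ w =
      w ⬝ᵥ M.submatrix some some *ᵥ w + ((M none ∘ some) ⬝ᵥ w) ^ 2 := by
  simp [elimNone, add_mulVec, vecMulVec_mulVec, sq, dotProduct_comm w]

lemma dotProduct_elimNone_mulVec_le {θ : ℝ} (hθ : θ ≤ 1) (hM : M.PosSemidef)
    (hMθ : ∀ x, x ⬝ᵥ M *ᵥ x ≤ θ * (x ⬝ᵥ x)) (w : ι → ℝ) :
    w ⬝ᵥ elimNone M *ᵥ w ≤ θ * (w ⬝ᵥ w) := by
  let t := (M none ∘ some) ⬝ᵥ w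
  have hdiag : 0 ≤ M none none := hM.diag_nonneg
  have hnorm : (fun o : Option ι => o.elim t w) ⬝ᵥ (fun o => o.elim t w) = t ^ 2 + w ⬝ᵥ w := by
    simp [dotProduct, Fintype.sum_option, sq]
  have h := hMθ fun o => o.elim t w
  rw [dotProduct_mulVec_optionElim (isHermitian_iff_isSymm.mp hM.isHermitian), hnorm] at h
  rw [dotProduct_elimNone_mulVec]
  nlinarith [mul_nonneg (sq_nonneg t) hdiag, mul_nonneg (sub_nonneg.mpr hθ) (sq_nonneg t)]

lemma trace_elimNone_le {θ : ℝ} (hM : M.PosSemidef)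
    (hMθ : ∀ x, x ⬝ᵥ M *ᵥ x ≤ θ * (x ⬝ᵥ x)) :
    (elimNone M).trace ≤ M.trace - (1 - θ) * M none none := by
  have hsymm (i : ι) : M (some i) none = M none (some i) := hM.isHermitian.apply _ _
  classical
  have hrow : M none none * M none none + ∑ i, M none (some i) * M none (some i) ≤
      θ * M none none := by
    simpa [dotProduct, Fintype.sum_option, hsymm] using
      mulVec_dotProduct_mulVec_le hM hMθ (Pi.single none 1)
  simp only [elimNone, trace, diag_apply, Matrix.add_apply, submatrix_apply, vecMulVec_apply,
    Function.comp, Finset.sum_add_distrib, Fintype.sum_option]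
  nlinarith [mul_self_nonneg (M none none)]

lemma exp_half_mul_exp_trace_elimNone_le {θ : ℝ} (hθ : θ < 1) (hM : M.PosSemidef)
    (hMθ : ∀ x, x ⬝ᵥ M *ᵥ x ≤ θ * (x ⬝ᵥ x)) :
    Real.exp (M none none / 2) * Real.exp ((elimNone M).trace / (2 * (1 - θ))) ≤
      Real.exp (M.trace / (2 * (1 - θ))) := by
  have hθ' : 0 < 1 - θ := sub_pos.mpr hθ
  rw [← Real.exp_add, Real.exp_le_exp]
  calc M none none / 2 + (elimNone M).trace / (2 * (1 - θ))
      = ((1 - θ) * M none none + (elimNone M).trace) / (2 * (1 - θ)) := by field_simp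
    _ ≤ M.trace / (2 * (1 - θ)) := by
        gcongr
        linarith [trace_elimNone_le hM hMθ]

lemma expect_exp_half_signVec_quadForm_le_elimNone [DecidableEq ι] (hM : M.IsSymm) :
    𝔼 z, Real.exp ((signVec z ⬝ᵥ M *ᵥ signVec z) / 2) ≤
      Real.exp (M none none / 2) *
        𝔼 w, Real.exp ((signVec w ⬝ᵥ elimNone M *ᵥ signVec w) / 2) := by
  rw [expect_optionElim, Finset.mul_expect]
  refine Finset.expect_le_expect fun w _ => ?_
  let t := (M none ∘ some) ⬝ᵥ signVec w
  let q := signVec w ⬝ᵥ M.submatrix some some *ᵥ signVec w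
  calc 𝔼 b, Real.exp ((signVec (fun o : Option ι => o.elim b w) ⬝ᵥ
        M *ᵥ signVec (fun o : Option ι => o.elim b w)) / 2)
      = 𝔼 b, Real.exp ((M none none + q) / 2) * Real.exp (sign b * t) := by
        refine Finset.expect_congr rfl fun b _ => ?_
        rw [signVec_optionElim, dotProduct_mulVec_optionElim hM, sign_sq, ← Real.exp_add]
        congr 1
        ring
    _ = Real.exp ((M none none + q) / 2) * Real.cosh t := by
        rw [← Finset.mul_expect, expect_exp_sign_mul]
    _ ≤ Real.exp ((M none none + q) / 2) * Real.exp (t ^ 2 / 2) := by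
        gcongr
        exact Real.cosh_le_exp_half_sq t
    _ = Real.exp (M none none / 2) *
          Real.exp ((signVec w ⬝ᵥ elimNone M *ᵥ signVec w) / 2) := by
        rw [dotProduct_elimNone_mulVec, ← Real.exp_add, ← Real.exp_add]
        congr 1
        ring

lemma comp_equiv_dotProduct_submatrix_mulVec {κ : Type*} [Fintype κ] (e : ι ≃ κ)
    (M : Matrix κ κ ℝ) (y : κ → ℝ) :
    (y ∘ e) ⬝ᵥ M.submatrix e e *ᵥ (y ∘ e) = y ⬝ᵥ M *ᵥ y := by
  rw [submatrix_mulVec_equiv, Function.comp_assoc, e.self_comp_symm, Function.comp_id,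
    comp_equiv_dotProduct_comp_equiv]

theorem expect_exp_half_signVec_quadForm_le {θ : ℝ} (hθ : θ < 1) [DecidableEq ι]
    {M : Matrix ι ι ℝ} (hM : M.PosSemidef) (hMθ : ∀ x, x ⬝ᵥ M *ᵥ x ≤ θ * (x ⬝ᵥ x)) :
    𝔼 z, Real.exp ((signVec z ⬝ᵥ M *ᵥ signVec z) / 2) ≤
      Real.exp (M.trace / (2 * (1 - θ))) := by
  revert M
  refine Fintype.induction_empty_option (P := fun α _ => ∀ [DecidableEq α] {M : Matrix α α ℝ},
    M.PosSemidef → (∀ x, x ⬝ᵥ M *ᵥ x ≤ θ * (x ⬝ᵥ x)) →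
      𝔼 z, Real.exp ((signVec z ⬝ᵥ M *ᵥ signVec z) / 2) ≤
        Real.exp (M.trace / (2 * (1 - θ)))) ?of_equiv ?empty ?option ι
  case of_equiv =>
    intro α β _ e ih _ M hM hMθ
    let _ := Fintype.ofEquiv β e.symm
    classical
    have hle := ih (hM.submatrix e) fun x => by
      have hx : x = (x ∘ e.symm) ∘ e := by simp [Function.comp_assoc]
      rw [hx, comp_equiv_dotProduct_submatrix_mulVec, comp_equiv_dotProduct_comp_equiv]
      exact hMθ _
    have htrace : (M.submatrix e e).trace = M.trace := e.sum_comp fun i => M i i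
    rw [htrace] at hle
    refine (Fintype.expect_equiv (e.arrowCongr (Equiv.refl _)).symm _ _ fun z => ?_).trans_le hle
    rw [← comp_equiv_dotProduct_submatrix_mulVec e]
    rfl
  case empty =>
    intro _ M _ _
    simp
  case option =>
    intro α _ ih _ M hM hMθ
    classical
    calc 𝔼 z, Real.exp ((signVec z ⬝ᵥ M *ᵥ signVec z) / 2)
        ≤ Real.exp (M none none / 2) *
          𝔼 w, Real.exp ((signVec w ⬝ᵥ elimNone M *ᵥ signVec w) / 2) := by
          convert expect_exp_half_signVec_quadForm_le_elimNone
            (isHermitian_iff_isSymm.mp hM.isHermitian)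
      _ ≤ Real.exp (M none none / 2) * Real.exp ((elimNone M).trace / (2 * (1 - θ))) := by
        gcongr
        exact ih (posSemidef_elimNone hM) (dotProduct_elimNone_mulVec_le hθ.le hM hMθ)
      _ ≤ Real.exp (M.trace / (2 * (1 - θ))) :=
        exp_half_mul_exp_trace_elimNone_le hθ hM hMθ

end QuadraticChaos

section DecoupledChaos

variable {ι κ : Type*} [Fintype ι] [Fintype κ] [DecidableEq ι] [DecidableEq κ]

theorem expect_exp_decoupledChaos_le {θ : ℝ} (hθ : θ < 1) {A : Matrix κ ι ℝ}
    (hA : ∀ x, (A *ᵥ x) ⬝ᵥ (A *ᵥ x) ≤ θ * (x ⬝ᵥ x)) :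
    𝔼 z, 𝔼 z', Real.exp (signVec z' ⬝ᵥ A *ᵥ signVec z) ≤
      Real.exp ((∑ i, ∑ j, A i j ^ 2) / (2 * (1 - θ))) := by
  have hgram (x : ι → ℝ) : x ⬝ᵥ (Aᵀ * A) *ᵥ x = (A *ᵥ x) ⬝ᵥ (A *ᵥ x) := by
    rw [← mulVec_mulVec, dotProduct_mulVec, vecMul_transpose]
  have htrace : (Aᵀ * A).trace = ∑ i, ∑ j, A i j ^ 2 := by
    rw [Finset.sum_comm]
    simp only [trace, diag_apply, Matrix.mul_apply, transpose_apply, sq]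
  calc 𝔼 z, 𝔼 z', Real.exp (signVec z' ⬝ᵥ A *ᵥ signVec z)
      ≤ 𝔼 z, Real.exp ((signVec z ⬝ᵥ (Aᵀ * A) *ᵥ signVec z) / 2) := by
        simp only [hgram]
        exact Finset.expect_le_expect fun z _ => expect_exp_signVec_dotProduct_le _
    _ ≤ Real.exp ((Aᵀ * A).trace / (2 * (1 - θ))) :=
        expect_exp_half_signVec_quadForm_le hθ (posSemidef_conjTranspose_mul_self A)
          fun x => (hgram x).trans_le (hA x)
    _ = Real.exp ((∑ i, ∑ j, A i j ^ 2) / (2 * (1 - θ))) := by rw [htrace]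

end DecoupledChaos

section Symmetrization

variable {α : Type*} [Fintype α] {σ : Equiv.Perm α} {f g : α → ℝ}

lemma expect_exp_eq_expect_cosh (hf : ∀ x, f (σ x) = -f x) :
    𝔼 x, Real.exp (f x) = 𝔼 x, Real.cosh (f x) := by
  have hσ : 𝔼 x, Real.exp (-f x) = 𝔼 x, Real.exp (f x) :=
    Fintype.expect_equiv σ _ _ fun x => by rw [hf]
  simp only [Real.cosh_eq, ← Finset.expect_div, Finset.expect_add_distrib, hσ, add_self_div_two]

lemma expect_exp_mul_le_expect_exp (hf : ∀ x, f (σ x) = -f x) (hg : ∀ x, g (σ x) = g x)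
    (hg_le : ∀ x, |g x| ≤ 1) :
    𝔼 x, Real.exp (g x * f x) ≤ 𝔼 x, Real.exp (f x) := by
  rw [expect_exp_eq_expect_cosh hf,
    expect_exp_eq_expect_cosh (f := fun x => g x * f x) fun x => by rw [hf, hg, mul_neg]]
  refine Finset.expect_le_expect fun x _ => Real.cosh_le_cosh.mpr ?_
  rw [abs_mul]
  exact mul_le_of_le_one_left (abs_nonneg _) (hg_le x)

end Symmetrization

section Compression

variable {𝕜 E ι : Type*} [RCLike 𝕜] [SeminormedAddCommGroup E] [InnerProductSpace 𝕜 E]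

/-- The real part of the matrix of the compression of `Φ` to the span of the family `v`. -/
def reCompression (v : ι → E) (Φ : E →ₗ[𝕜] E) : Matrix ι ι ℝ :=
  .of fun i j => RCLike.re (inner 𝕜 (v i) (Φ (v j)))

variable [Fintype ι] {v : ι → E} {Φ : E →ₗ[𝕜] E}

lemma reCompression_mulVec (x : ι → ℝ) (i : ι) :
    (reCompression v Φ *ᵥ x) i = RCLike.re (inner 𝕜 (v i) (Φ (∑ j, (x j : 𝕜) • v j))) := by
  simp [reCompression, mulVec, dotProduct, inner_sum, inner_smul_right, mul_comm]

lemma dotProduct_reCompression_mulVec (x y : ι → ℝ) :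
    y ⬝ᵥ reCompression v Φ *ᵥ x =
      RCLike.re (inner 𝕜 (∑ i, (y i : 𝕜) • v i) (Φ (∑ j, (x j : 𝕜) • v j))) := by
  rw [dotProduct]
  simp only [reCompression_mulVec]
  rw [sum_inner]
  simp [inner_smul_left]

lemma norm_sq_sum_ofReal_smul (hv : Orthonormal 𝕜 v) (x : ι → ℝ) :
    ‖∑ i, (x i : 𝕜) • v i‖ ^ 2 = x ⬝ᵥ x := by
  rw [@norm_sq_eq_re_inner 𝕜, hv.inner_sum]
  simp [dotProduct]

lemma reCompression_mulVec_dotProduct_self_le (hv : Orthonormal 𝕜 v) {r : ℝ}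
    (hΦ : ∀ X, ‖Φ X‖ ≤ r * ‖X‖) (x : ι → ℝ) :
    (reCompression v Φ *ᵥ x) ⬝ᵥ (reCompression v Φ *ᵥ x) ≤ r ^ 2 * (x ⬝ᵥ x) := by
  let X := ∑ i, (x i : 𝕜) • v i
  calc (reCompression v Φ *ᵥ x) ⬝ᵥ (reCompression v Φ *ᵥ x)
      ≤ ∑ i, ‖inner 𝕜 (v i) (Φ X)‖ ^ 2 := by
        refine Finset.sum_le_sum fun i _ => ?_
        rw [reCompression_mulVec, ← sq, ← sq_abs]
        gcongr
        exact RCLike.abs_re_le_norm _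
    _ ≤ ‖Φ X‖ ^ 2 := hv.sum_inner_products_le _
    _ ≤ (r * ‖X‖) ^ 2 := by
        gcongr
        exact hΦ X
    _ = r ^ 2 * (x ⬝ᵥ x) := by rw [mul_pow, norm_sq_sum_ofReal_smul hv]

theorem expect_exp_truncated_le [DecidableEq ι] (hv : Orthonormal 𝕜 v) {r : ℝ} (hr : r ^ 2 < 1)
    (hΦ : ∀ X, ‖Φ X‖ ≤ r * ‖X‖) {a : (ι → Bool) → ℝ} (ha : ∀ z, a zᶜ = a z)
    (ha_le : ∀ z, |a z| ≤ 1) :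
    𝔼 z, 𝔼 z', Real.exp (a z' * a z * RCLike.re (inner 𝕜 (∑ i, (sign (z' i) : 𝕜) • v i)
        (Φ (∑ i, (sign (z i) : 𝕜) • v i)))) ≤
      Real.exp ((∑ i, ∑ j, reCompression v Φ i j ^ 2) / (2 * (1 - r ^ 2))) := by
  calc 𝔼 z, 𝔼 z', Real.exp (a z' * a z * RCLike.re (inner 𝕜 (∑ i, (sign (z' i) : 𝕜) • v i)
        (Φ (∑ i, (sign (z i) : 𝕜) • v i))))
      = 𝔼 z, 𝔼 z', Real.exp (a z' * a z *
          (signVec z' ⬝ᵥ reCompression v Φ *ᵥ signVec z)) := by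
        simp only [dotProduct_reCompression_mulVec, signVec]
    _ ≤ 𝔼 z, 𝔼 z', Real.exp (signVec z' ⬝ᵥ reCompression v Φ *ᵥ signVec z) := by
        refine Finset.expect_le_expect fun z _ => expect_exp_mul_le_expect_exp
          (σ := (compl_involutive (α := ι → Bool)).toPerm) (fun z' => ?_) (fun z' => ?_)
          fun z' => ?_
        · simp [signVec_compl]
        · simp [ha]
        · rw [abs_mul]
          exact mul_le_one₀ (ha_le z') (abs_nonneg _) (ha_le z)
    _ ≤ Real.exp ((∑ i, ∑ j, reCompression v Φ i j ^ 2) / (2 * (1 - r ^ 2))) :=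
        expect_exp_decoupledChaos_le hr (reCompression_mulVec_dotProduct_self_le hv hΦ)

end Compression

section LudersChannel

/-- The Hilbert–Schmidt seminorm on square matrices. -/
local instance hsSeminormedAddCommGroup {d : ℕ} :
    SeminormedAddCommGroup (Matrix (Fin d) (Fin d) ℂ) :=
  toMatrixSeminormedAddCommGroup 1 PosSemidef.one

/-- The Hilbert–Schmidt inner product on square matrices. -/
local instance hsInnerProductSpace {d : ℕ} : InnerProductSpace ℂ (Matrix (Fin d) (Fin d) ℂ) :=
  toMatrixInnerProductSpace 1 PosSemidef.one

variable {d k n : ℕ}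

lemma inner_eq_trace (X Y : Matrix (Fin d) (Fin d) ℂ) : inner ℂ X Y = (Xᴴ * Y).trace := by
  calc inner ℂ X Y = (Y * 1 * Xᴴ).trace := rfl
    _ = (Xᴴ * Y).trace := by rw [Matrix.mul_one, trace_mul_comm]

lemma star_dotProduct_eq_inner (u v : Fin d → ℂ) :
    star u ⬝ᵥ v = inner ℂ (WithLp.toLp 2 u) (WithLp.toLp 2 v) := by
  rw [EuclideanSpace.inner_toLp_toLp, dotProduct_comm]

lemma star_dotProduct_self_eq_norm_sq (v : Fin d → ℂ) :
    star v ⬝ᵥ v = (‖WithLp.toLp 2 v‖ : ℂ) ^ 2 := by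
  rw [star_dotProduct_eq_inner, inner_self_eq_norm_sq_to_K]
  rfl

lemma trace_mul_vecMulVec_star (X Y : Matrix (Fin d) (Fin d) ℂ) (v : Fin d → ℂ) :
    (Xᴴ * Y * vecMulVec v (star v)).trace = star (X *ᵥ v) ⬝ᵥ (Y *ᵥ v) := by
  rw [mul_vecMulVec, trace_vecMulVec, ← mulVec_mulVec, dotProduct_comm, dotProduct_mulVec,
    star_mulVec]

lemma norm_sq_eq_sum_norm_mulVec_sq {ψ : Fin k → Fin d → ℂ}
    (hψ : ∑ x, vecMulVec (ψ x) (star (ψ x)) = 1) (X : Matrix (Fin d) (Fin d) ℂ) :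
    ‖X‖ ^ 2 = ∑ x, ‖WithLp.toLp 2 (X *ᵥ ψ x)‖ ^ 2 := by
  have h : (‖X‖ : ℂ) ^ 2 = ∑ x, (‖WithLp.toLp 2 (X *ᵥ ψ x)‖ : ℂ) ^ 2 := by
    calc (‖X‖ : ℂ) ^ 2 = (Xᴴ * X * ∑ x, vecMulVec (ψ x) (star (ψ x))).trace := by
          rw [hψ, Matrix.mul_one, ← inner_eq_trace, inner_self_eq_norm_sq_to_K]
          rfl
      _ = ∑ x, (‖WithLp.toLp 2 (X *ᵥ ψ x)‖ : ℂ) ^ 2 := by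
          simp only [Finset.mul_sum, trace_sum, trace_mul_vecMulVec_star,
            star_dotProduct_self_eq_norm_sq]
  exact_mod_cast h

lemma inner_luders (ψ : Fin k → Fin d → ℂ) (X Y : Matrix (Fin d) (Fin d) ℂ) :
    inner ℂ Y (luders ψ X) = ∑ x, (star (ψ x) ⬝ᵥ ψ x)⁻¹ *
      ((star (ψ x) ⬝ᵥ X *ᵥ ψ x) * (star (Y *ᵥ ψ x) ⬝ᵥ ψ x)) := by
  rw [luders, inner_sum]
  refine Finset.sum_congr rfl fun x _ => ?_
  have hcollapse : vecMulVec (ψ x) (star (ψ x)) * X * vecMulVec (ψ x) (star (ψ x)) =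
      (star (ψ x) ⬝ᵥ X *ᵥ ψ x) • vecMulVec (ψ x) (star (ψ x)) := by
    rw [vecMulVec_mul, vecMulVec_mul_vecMulVec, vecMulVec_smul, dotProduct_mulVec]
  rw [hcollapse, inner_smul_right, inner_smul_right, inner_eq_trace]
  congr 2
  simpa using trace_mul_vecMulVec_star Y 1 (ψ x)

lemma norm_luders_summand_le (v u w : Fin d → ℂ) :
    ‖(star v ⬝ᵥ v)⁻¹ * ((star v ⬝ᵥ u) * (star w ⬝ᵥ v))‖ ≤
      ‖WithLp.toLp 2 w‖ * ‖WithLp.toLp 2 u‖ := by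
  rw [star_dotProduct_self_eq_norm_sq, star_dotProduct_eq_inner, star_dotProduct_eq_inner,
    norm_mul, norm_mul, norm_inv, norm_pow, Complex.norm_real, norm_norm]
  refine inv_mul_le_of_le_mul₀ (by positivity) (by positivity) ?_
  set v' := WithLp.toLp 2 v
  set u' := WithLp.toLp 2 u
  set w' := WithLp.toLp 2 w
  calc ‖inner ℂ v' u'‖ * ‖inner ℂ w' v'‖
      ≤ (‖v'‖ * ‖u'‖) * (‖w'‖ * ‖v'‖) := by
        gcongr <;> exact norm_inner_le_norm _ _
    _ = ‖v'‖ ^ 2 * (‖w'‖ * ‖u'‖) := by ring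

theorem norm_luders_le {ψ : Fin k → Fin d → ℂ} (hψ : ∑ x, vecMulVec (ψ x) (star (ψ x)) = 1)
    (X : Matrix (Fin d) (Fin d) ℂ) : ‖luders ψ X‖ ≤ ‖X‖ := by
  have hsq (Y : Matrix (Fin d) (Fin d) ℂ) := norm_sq_eq_sum_norm_mulVec_sq hψ Y
  have hbilin (Y : Matrix (Fin d) (Fin d) ℂ) : ‖inner ℂ Y (luders ψ X)‖ ≤ ‖Y‖ * ‖X‖ := by
    calc ‖inner ℂ Y (luders ψ X)‖
        ≤ ∑ x, ‖WithLp.toLp 2 (Y *ᵥ ψ x)‖ * ‖WithLp.toLp 2 (X *ᵥ ψ x)‖ := by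
          rw [inner_luders]
          exact norm_sum_le_of_le _ fun x _ => norm_luders_summand_le _ _ _
      _ ≤ ‖Y‖ * ‖X‖ := by
          refine abs_le_of_sq_le_sq' ?_ (by positivity) |>.2
          rw [mul_pow, hsq, hsq]
          exact Finset.sum_mul_sq_le_sq_mul_sq _ _ _
  have h := hbilin (luders ψ X)
  rw [inner_self_eq_norm_sq_to_K, norm_pow, RCLike.norm_ofReal, abs_norm, sq] at h
  rcases (norm_nonneg (luders ψ X)).eq_or_lt with h0 | hpos
  · exact h0 ▸ norm_nonneg X
  · exact le_of_mul_le_mul_left h hpos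

/-- The average of the Lüders channels of the POVMs `ψ i`, as a linear map. -/
def avgLuders (ψ : Fin n → Fin k → Fin d → ℂ) :
    Matrix (Fin d) (Fin d) ℂ →ₗ[ℂ] Matrix (Fin d) (Fin d) ℂ where
  toFun X := (n : ℂ)⁻¹ • ∑ i, luders (ψ i) X
  map_add' X Y := by
    simp only [luders, Matrix.mul_add, Matrix.add_mul, smul_add, Finset.sum_add_distrib]
  map_smul' a X := by
    simp only [luders, Matrix.mul_smul, Matrix.smul_mul, smul_comm _ a, ← Finset.smul_sum,
      RingHom.id_apply]

lemma avgLuders_apply (ψ : Fin n → Fin k → Fin d → ℂ) (X : Matrix (Fin d) (Fin d) ℂ) :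
    avgLuders ψ X = (n : ℂ)⁻¹ • ∑ i, luders (ψ i) X :=
  rfl

lemma norm_avgLuders_le {ψ : Fin n → Fin k → Fin d → ℂ}
    (hψ : ∀ i, ∑ x, vecMulVec (ψ i x) (star (ψ i x)) = 1) (X : Matrix (Fin d) (Fin d) ℂ) :
    ‖avgLuders ψ X‖ ≤ ‖X‖ := by
  calc ‖avgLuders ψ X‖ = (n : ℝ)⁻¹ * ‖∑ i, luders (ψ i) X‖ := by
        rw [avgLuders_apply, norm_smul, norm_inv, Complex.norm_natCast]
    _ ≤ (n : ℝ)⁻¹ * (n * ‖X‖) := by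
        gcongr
        simpa using norm_sum_le_of_le Finset.univ fun i _ => norm_luders_le (hψ i) X
    _ ≤ ‖X‖ := inv_mul_le_of_le_mul₀ n.cast_nonneg (norm_nonneg X) le_rfl

theorem expect_exp_truncated_avgLuders_le {ι : Type*} [Fintype ι] [DecidableEq ι]
    {V : ι → Matrix (Fin d) (Fin d) ℂ} (hherm : ∀ i, (V i).IsHermitian)
    (hV : ∀ i j, ((V i)ᴴ * V j).trace = if i = j then 1 else 0)
    {ψ : Fin n → Fin k → Fin d → ℂ} (hψ : ∀ i, ∑ x, vecMulVec (ψ i x) (star (ψ i x)) = 1)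
    {r : ℝ} (hr : r ^ 2 < 1) {a : (ι → Bool) → ℝ} (ha : ∀ z, a zᶜ = a z)
    (ha_le : ∀ z, |a z| ≤ 1) :
    𝔼 z, 𝔼 z', Real.exp (a z' * a z * (r *
        ((∑ i, (sign (z' i) : ℂ) • V i) *
          avgLuders ψ (∑ i, (sign (z i) : ℂ) • V i)).trace.re)) ≤
      Real.exp (r ^ 2 / (2 * (1 - r ^ 2)) *
        ∑ i, ∑ j, (V i * avgLuders ψ (V j)).trace.re ^ 2) := by
  have horth : Orthonormal ℂ V := orthonormal_iff_ite.mpr fun i j => by rw [inner_eq_trace, hV]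
  have hcontr (X : Matrix (Fin d) (Fin d) ℂ) : ‖((r : ℂ) • avgLuders ψ) X‖ ≤ |r| * ‖X‖ := by
    rw [LinearMap.smul_apply, norm_smul, Complex.norm_real, Real.norm_eq_abs]
    gcongr
    exact norm_avgLuders_le hψ X
  have hinner {Y : Matrix (Fin d) (Fin d) ℂ} (hY : Y.IsHermitian)
      (X : Matrix (Fin d) (Fin d) ℂ) :
      RCLike.re (inner ℂ Y (((r : ℂ) • avgLuders ψ) X)) =
        r * (Y * avgLuders ψ X).trace.re := by
    rw [LinearMap.smul_apply, inner_smul_right, inner_eq_trace, hY.eq]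
    exact Complex.re_ofReal_mul _ _
  have hsum (z : ι → Bool) : (∑ i, (sign (z i) : ℂ) • V i).IsHermitian := by
    simp [IsHermitian, conjTranspose_sum, conjTranspose_smul, fun i => (hherm i).eq]
  have h := expect_exp_truncated_le horth (sq_abs r ▸ hr) hcontr ha ha_le
  simp only [reCompression, of_apply, hinner (hherm _), mul_pow, ← Finset.mul_sum, sq_abs] at h
  refine Eq.trans_le ?_ (h.trans_eq ?_)
  · refine Finset.expect_congr rfl fun z _ => Finset.expect_congr rfl fun z' _ => ?_
    rw [← hinner (hsum z')]
    rfl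
  · rw [div_mul_eq_mul_div]

end LudersChannel

lemma opNorm_neg {m n : ℕ} (A : Matrix (Fin m) (Fin n) ℂ) : opNorm (-A) = opNorm A := by
  rw [opNorm, opNorm, map_neg, map_neg, norm_neg]

lemma sum_sum_div_two_pow_eq_expect {ℓ : ℕ} (f : (Fin ℓ → Bool) → (Fin ℓ → Bool) → ℝ) :
    (∑ z, ∑ z', f z z') / 2 ^ ℓ / 2 ^ ℓ = 𝔼 z, 𝔼 z', f z z' := by
  simp [Fintype.expect_eq_sum_div_card, Finset.sum_div]

theorem chi_square_fluctuation_bound_general {d ℓ n k : ℕ} (hd : 0 < d)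
    {V : Fin ℓ → Matrix (Fin d) (Fin d) ℂ} (hherm : ∀ i, (V i).IsHermitian)
    (hV : ∀ i j, ((V i)ᴴ * V j).trace = if i = j then 1 else 0)
    {ψ : Fin n → Fin k → Fin d → ℂ} (hψ : ∀ i, ∑ x, vecMulVec (ψ i x) (star (ψ i x)) = 1)
    {ε : ℝ} (hn : 2 * n * ε ^ 2 ≤ ℓ) :
    let Δ : (Fin ℓ → Bool) → Matrix (Fin d) (Fin d) ℂ := fun z =>
      ((ε / Real.sqrt (d * ℓ) : ℝ) : ℂ) • ∑ i, (sign (z i) : ℂ) • V i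
    let Δbar : (Fin ℓ → Bool) → Matrix (Fin d) (Fin d) ℂ := fun z =>
      ((min 1 (1 / ((d : ℝ) * opNorm (Δ z))) : ℝ) : ℂ) • Δ z
    𝔼 z, 𝔼 z', Real.exp (n * d * (Δbar z' * avgLuders ψ (Δbar z)).trace.re) ≤
      Real.exp ((n : ℝ) ^ 2 * ε ^ 4 / (ℓ : ℝ) ^ 2 *
        ∑ i, ∑ j, (V i * avgLuders ψ (V j)).trace.re ^ 2) := by
  intro Δ Δbar
  let a : (Fin ℓ → Bool) → ℝ := fun z => min 1 (1 / (d * opNorm (Δ z)))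
  let r := n * ε ^ 2 / ℓ
  have hΔ (z : Fin ℓ → Bool) : Δ zᶜ = -Δ z := by
    simp [Δ, sign_not]
  have ha (z : Fin ℓ → Bool) : a zᶜ = a z := by simp only [a, hΔ, opNorm_neg]
  have ha_le (z : Fin ℓ → Bool) : |a z| ≤ 1 := by
    have hnonneg : 0 ≤ opNorm (Δ z) := norm_nonneg _
    rw [abs_of_nonneg (by positivity)]
    exact min_le_left _ _
  have hr : r ^ 2 ≤ 1 / 4 := by
    have h0 : 0 ≤ r := by positivity
    have h1 : r ≤ 1 / 2 := div_le_of_le_mul₀ ℓ.cast_nonneg (by norm_num) (by linarith)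
    nlinarith
  have hscale : n * d * (ε / √(d * ℓ)) ^ 2 = r := by
    rw [div_pow, Real.sq_sqrt (by positivity)]
    simp only [r]
    field_simp
  calc 𝔼 z, 𝔼 z', Real.exp (n * d * (Δbar z' * avgLuders ψ (Δbar z)).trace.re)
      = 𝔼 z, 𝔼 z', Real.exp (a z' * a z * (r * ((∑ i, (sign (z' i) : ℂ) • V i) *
          avgLuders ψ (∑ i, (sign (z i) : ℂ) • V i)).trace.re)) := by
        refine Finset.expect_congr rfl fun z _ => Finset.expect_congr rfl fun z' _ => ?_
        rw [← hscale]
        simp only [Δbar, Δ, a, map_smul, Matrix.mul_smul, Matrix.smul_mul, trace_smul,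
          smul_eq_mul, Complex.re_ofReal_mul]
        ring_nf
    _ ≤ Real.exp (r ^ 2 / (2 * (1 - r ^ 2)) *
          ∑ i, ∑ j, (V i * avgLuders ψ (V j)).trace.re ^ 2) :=
        expect_exp_truncated_avgLuders_le hherm hV hψ (by linarith) ha ha_le
    _ ≤ Real.exp (n ^ 2 * ε ^ 4 / ℓ ^ 2 *
          ∑ i, ∑ j, (V i * avgLuders ψ (V j)).trace.re ^ 2) := by
        have hcoeff : r ^ 2 / (2 * (1 - r ^ 2)) ≤ n ^ 2 * ε ^ 4 / ℓ ^ 2 := by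
          calc r ^ 2 / (2 * (1 - r ^ 2)) ≤ r ^ 2 := div_le_self (sq_nonneg r) (by linarith)
            _ = n ^ 2 * ε ^ 4 / ℓ ^ 2 := by
              simp only [r]
              ring
        gcongr

lemma two_mul_mul_sq_le_of_lt_div {d ℓ n : ℕ} {ε : ℝ} (hε : ε ≠ 0) (hdℓ : d ^ 2 ≤ 2 * ℓ)
    (hn : (n : ℝ) < d ^ 2 / (6 * ε ^ 2)) : 2 * n * ε ^ 2 ≤ ℓ := by
  have hdℓ' : (d : ℝ) ^ 2 ≤ 2 * ℓ := mod_cast hdℓ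
  rw [lt_div_iff₀ (by positivity)] at hn
  have hnε : 0 ≤ n * ε ^ 2 := by positivity
  linarith

/-- Bounding the decoupled chi-square fluctuation term by the projected
Hilbert–Schmidt norm of the average Lüders channel: for the binary perturbations
`Δ_z = (c ε/√(dℓ)) ∑_{i<ℓ} z_i V_i`, their normalizations
`Δ̄_z = min{1, 1/(d‖Δ_z‖_op)}·Δ_z` and the average Lüders channel `H̄` of `n` rank-1
POVMs, whenever `n < d²/(6c²ε²)`:
`E_{z,z'}[exp(n d Tr[Δ̄_{z'} H̄(Δ̄_z)])] − 1
   ≤ exp((c²n²ε⁴/ℓ²) ∑_{i,j≤ℓ} Tr[V_i H̄(V_j)]²) − 1 + 4 exp(−d)`. -/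
theorem chi_square_fluctuation_bound :
    ∃ c : ℝ, 0 < c ∧ c ≤ 10 * Real.sqrt 2 ∧
      ∀ d : ℕ, 16 ≤ d →
      ∀ ℓ : ℕ, d ^ 2 ≤ 2 * ℓ → ℓ ≤ d ^ 2 - 1 →
      ∀ V : Fin (d ^ 2) → Matrix (Fin d) (Fin d) ℂ,
      (∀ i, (V i).IsHermitian) →
      (∀ i j, ((V i)ᴴ * V j).trace = if i = j then 1 else 0) →
      (∀ h : d ^ 2 - 1 < d ^ 2,
        V ⟨d ^ 2 - 1, h⟩ = ((Real.sqrt d : ℂ))⁻¹ • (1 : Matrix (Fin d) (Fin d) ℂ)) →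
      ∀ ε : ℝ, 0 < ε → ε < 1 / c ^ 2 →
      ∀ n k : ℕ, ∀ ψ : Fin n → Fin k → Fin d → ℂ,
      (∀ i x, ψ i x ≠ 0) →
      (∀ i, ∑ x, vecMulVec (ψ i x) (star (ψ i x)) = (1 : Matrix (Fin d) (Fin d) ℂ)) →
      (n : ℝ) < (d : ℝ) ^ 2 / (6 * c ^ 2 * ε ^ 2) →
      ∀ hℓ : ℓ ≤ d ^ 2,
      let Hbar : Matrix (Fin d) (Fin d) ℂ → Matrix (Fin d) (Fin d) ℂ := fun X =>
        (n : ℂ)⁻¹ • ∑ i, luders (ψ i) X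
      let Δ : (Fin ℓ → Bool) → Matrix (Fin d) (Fin d) ℂ := fun z =>
        ((c * ε / Real.sqrt (d * ℓ) : ℝ) : ℂ) •
          ∑ i : Fin ℓ, (sign (z i) : ℂ) • V (Fin.castLE hℓ i)
      let Δbar : (Fin ℓ → Bool) → Matrix (Fin d) (Fin d) ℂ := fun z =>
        ((min 1 (1 / ((d : ℝ) * opNorm (Δ z))) : ℝ) : ℂ) • Δ z
      (∑ z : Fin ℓ → Bool, ∑ z' : Fin ℓ → Bool,
          Real.exp ((n : ℝ) * d * ((Δbar z') * Hbar (Δbar z)).trace.re)) / 2 ^ ℓ / 2 ^ ℓ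
          - 1
        ≤ Real.exp ((c ^ 2 * (n : ℝ) ^ 2 * ε ^ 4 / (ℓ : ℝ) ^ 2) *
              ∑ i : Fin ℓ, ∑ j : Fin ℓ,
                ((V (Fin.castLE hℓ i) * Hbar (V (Fin.castLE hℓ j))).trace.re) ^ 2)
            - 1 + 4 * Real.exp (-(d : ℝ)) := by
  refine ⟨1, one_pos, by linarith [Real.one_le_sqrt.mpr one_le_two], ?_⟩
  intro d hd ℓ hdℓ _ V hherm hV _ ε hε _ n k ψ _ hψ hn hℓ
  simp only [one_mul, one_pow, mul_one] at hn ⊢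
  rw [sum_sum_div_two_pow_eq_expect]
  have hgeneral := chi_square_fluctuation_bound_general (by lia)
    (fun i => hherm (Fin.castLE hℓ i)) (fun i j => by simp [hV]) hψ
    (two_mul_mul_sq_le_of_lt_div hε.ne' hdℓ hn)
  exact (sub_le_sub_right hgeneral 1).trans (le_add_of_nonneg_right (by positivity))

end
end
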